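/- arXiv:2601.05945 — 2 statements merged into one kernel-verified Lean document; each statement's English description precedes it below -/
import Mathlib

section
/- For every δ > 0 there exists a constant C = C(δ) > 0, independent of k and of F, such that: for every k ∈ ℕ and every k-times continuously differentiable F : ℝ → ℝ with F^(ℓ) ∈ L²(π₁) for all ℓ ≤ k, one has ‖F^(k)‖_{L²(π₁)} ≤ C · sup_{m ≥ k} (1 + m^{k/2 + 1/2 + δ}) |ĉ_m(F)|. -/
open MeasureTheory ProbabilityTheory Real Filter

/-- The standard Gaussian measure `π₁` on `ℝ`. -/
noncomputable def stdGaussian : Measure ℝ := gaussianReal 0 1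

/-- The `m`-th probabilists' Hermite polynomial `He_m`, evaluated at `x`. -/
noncomputable def He (m : ℕ) (x : ℝ) : ℝ := Polynomial.aeval x (Polynomial.hermite m)

/-- The normalised Hermite coefficients `ĉ_m(F)`. -/
noncomputable def hermiteCoeff (F : ℝ → ℝ) (m : ℕ) : ℝ :=
  (Real.sqrt (Nat.factorial m))⁻¹ * ∫ x, F x * He m x ∂stdGaussian


instance : IsProbabilityMeasure _root_.stdGaussian := by unfold _root_.stdGaussian; infer_instance

lemma memLp_pow_sg (n : ℕ) : MemLp (fun x : ℝ => x ^ n) 2 _root_.stdGaussian := by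
  rcases Nat.eq_zero_or_pos n with rfl | hn
  · simpa using memLp_const (1 : ℝ)
  rw [memLp_two_iff_integrable_sq (by fun_prop)]
  have h3 := (memLp_id_gaussianReal' (μ := 0) (v := 1) ((2 * n : ℕ) : ENNReal) (ENNReal.natCast_ne_top _)).integrable_norm_pow (by omega)
  refine h3.congr (ae_of_all _ fun x => ?_)
  simp only [id, Real.norm_eq_abs]
  rw [mul_comm 2 n, pow_mul, ← abs_pow, sq_abs]

lemma memLp_poly (p : Polynomial ℝ) : MemLp (fun x : ℝ => p.eval x) 2 _root_.stdGaussian := by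
  simp only [Polynomial.eval_eq_sum, Polynomial.sum]
  exact memLp_finsetSum _ fun i _ => (memLp_pow_sg i).const_mul _

/-- Real Hermite polynomial. -/
noncomputable def HP (m : ℕ) : Polynomial ℝ := (Polynomial.hermite m).map (Int.castRingHom ℝ)

lemma He_eq (m : ℕ) (x : ℝ) : He m x = (HP m).eval x := by
  unfold He HP
  rw [Polynomial.eval_map, Polynomial.aeval_def]; rfl

lemma HP_succ (m : ℕ) : HP (m + 1) = Polynomial.X * HP m - Polynomial.derivative (HP m) := by
  simp [HP, Polynomial.hermite_succ, Polynomial.derivative_map]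

lemma HP_monic (m : ℕ) : (HP m).Monic := (Polynomial.hermite_monic m).map _

lemma HP_natDegree (m : ℕ) : (HP m).natDegree = m := by
  unfold HP
  rw [(Polynomial.hermite_monic m).natDegree_map, Polynomial.natDegree_hermite]

lemma memLp_He (m : ℕ) : MemLp (He m) 2 _root_.stdGaussian := by
  have : He m = fun x => (HP m).eval x := funext (He_eq m)
  rw [this]; exact memLp_poly _

lemma integrable_sg (f : ℝ → ℝ) (h : Integrable f _root_.stdGaussian) :
    Integrable (fun x => gaussianPDFReal 0 1 x * f x) := by
  unfold _root_.stdGaussian at h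
  rw [gaussianReal_of_var_ne_zero _ (by simp),
    integrable_withDensity_iff_integrable_smul' (measurable_gaussianPDF _ _)
      (ae_of_all _ fun _ ↦ gaussianPDF_lt_top)] at h
  simpa using h

lemma hasDerivAt_pdf (x : ℝ) :
    HasDerivAt (gaussianPDFReal 0 1) (-x * gaussianPDFReal 0 1 x) x := by
  have : gaussianPDFReal 0 1 = fun x => (√(2 * π))⁻¹ * Real.exp (- x ^ 2 / 2) := by
    ext x; simp [gaussianPDFReal]
  rw [this]
  have h1 : HasDerivAt (fun x : ℝ => - x ^ 2 / 2) (-x) x := by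
    have := ((hasDerivAt_pow 2 x).neg).div_const 2
    convert! this using 1; simp; ring
  convert! (h1.exp).const_mul _ using 1; ring

lemma ibp (G : ℝ → ℝ) (hG : ContDiff ℝ 1 G) (h0 : MemLp G 2 _root_.stdGaussian)
    (h1 : MemLp (deriv G) 2 _root_.stdGaussian) (m : ℕ) :
    ∫ x, deriv G x * He m x ∂_root_.stdGaussian = ∫ x, G x * He (m + 1) x ∂_root_.stdGaussian := by
  have i0 : Integrable (fun x => G x * He m x) _root_.stdGaussian := h0.integrable_mul (memLp_He m)
  have i1 : Integrable (fun x => deriv G x * He m x) _root_.stdGaussian := h1.integrable_mul (memLp_He m)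
  have i2 : Integrable (fun x => G x * He (m+1) x) _root_.stdGaussian := h0.integrable_mul (memLp_He _)
  have key := integral_eq_zero_of_hasDerivAt_of_integrable
    (f := fun x => gaussianPDFReal 0 1 x * (G x * He m x))
    (f' := fun x => gaussianPDFReal 0 1 x * (deriv G x * He m x - G x * He (m+1) x)) ?_
    (integrable_sg _ (i1.sub i2)) (integrable_sg _ i0)
  · rw [← sub_eq_zero, ← integral_sub i1 i2]
    unfold _root_.stdGaussian
    rw [integral_gaussianReal_eq_integral_smul (by simp)]
    simpa using key
  · intro x
    have hd : HasDerivAt G (deriv G x) x := (hG.differentiable (by simp) x).hasDerivAt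
    have hh : HasDerivAt (He m) ((Polynomial.derivative (HP m)).eval x) x := by
      have : He m = fun x => (HP m).eval x := funext (He_eq m)
      rw [this]; exact (HP m).hasDerivAt x
    convert! (hasDerivAt_pdf x).mul (hd.mul hh) using 1
    simp only [He_eq, HP_succ, Polynomial.eval_sub, Polynomial.eval_mul, Polynomial.eval_X, Pi.mul_apply]
    ring

lemma ibp_iter (k : ℕ) (F : ℝ → ℝ) (hF : ContDiff ℝ k F)
    (h : ∀ ℓ ≤ k, MemLp (iteratedDeriv ℓ F) 2 _root_.stdGaussian) (j : ℕ) :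
    ∫ x, iteratedDeriv k F x * He j x ∂_root_.stdGaussian = ∫ x, F x * He (j + k) x ∂_root_.stdGaussian := by
  induction k generalizing j with
  | zero => simp
  | succ k ih =>
    have hc : ContDiff ℝ 1 (iteratedDeriv k F) := by
      have := hF
      rw [show ((k + 1 : ℕ) : WithTop ℕ∞) = 1 + k by push_cast; ring] at this
      rw [iteratedDeriv_eq_iterate]
      exact ContDiff.iterate_deriv' 1 k this
    rw [iteratedDeriv_succ, ibp _ hc (h k (by omega)) (by rw [← iteratedDeriv_succ]; exact h _ le_rfl),
      ih (hF.of_le (by exact_mod_cast Nat.le_succ k)) (fun l hl => h l (by omega))]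
    congr 2; ext x; congr 2; omega

lemma iterDeriv_poly (p : Polynomial ℝ) (n : ℕ) :
    iteratedDeriv n (fun x => p.eval x) = fun x => ((Polynomial.derivative^[n]) p).eval x := by
  induction n with
  | zero => simp
  | succ n ih =>
    rw [iteratedDeriv_succ, ih, Function.iterate_succ_apply']
    ext x; exact Polynomial.deriv _

lemma poly_ibp (p : Polynomial ℝ) (n : ℕ) :
    ∫ x, p.eval x * He n x ∂_root_.stdGaussian = ∫ x, ((Polynomial.derivative^[n]) p).eval x ∂_root_.stdGaussian := by
  have h := ibp_iter n (fun x => p.eval x) (by simpa using p.contDiff_aeval (𝕜 := ℝ) n)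
    (fun l _ => by rw [iterDeriv_poly]; exact memLp_poly _) 0
  rw [iterDeriv_poly] at h
  simp only [zero_add] at h
  rw [← h]; simp [He]

lemma orth_lt (m n : ℕ) (h : m < n) : ∫ x, He m x * He n x ∂_root_.stdGaussian = 0 := by
  simp only [He_eq m]
  rw [poly_ibp, Polynomial.iterate_derivative_eq_zero (by rw [HP_natDegree]; exact h)]
  simp

lemma orth_self (n : ℕ) : ∫ x, He n x * He n x ∂_root_.stdGaussian = n.factorial := by
  simp only [He_eq n]
  simp only [← He_eq n]
  simp only [show ∀ x, He n x * He n x = (HP n).eval x * He n x from fun x => by rw [← He_eq]]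
  rw [poly_ibp]
  have : (Polynomial.derivative^[n]) (HP n) = Polynomial.C (n.factorial : ℝ) := by
    have hd : ((Polynomial.derivative^[n]) (HP n)).natDegree = 0 := by
      have := Polynomial.natDegree_iterate_derivative (HP n) n
      rw [HP_natDegree] at this; omega
    rw [Polynomial.eq_C_of_natDegree_eq_zero hd, Polynomial.coeff_iterate_derivative]
    have := HP_monic n
    rw [Polynomial.Monic, Polynomial.leadingCoeff, HP_natDegree] at this
    simp [this, Nat.descFactorial_self]
  simp [this]

lemma complete (G : ℝ → ℝ) (hG : MemLp G 2 _root_.stdGaussian)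
    (h : ∀ n : ℕ, ∫ x, G x * x ^ n ∂_root_.stdGaussian = 0) : G =ᵐ[_root_.stdGaussian] 0 := by
  have hGi : Integrable G _root_.stdGaussian := hG.integrable (by norm_num)
  have hexp : ∀ t : ℝ, MemLp (fun x : ℝ => Real.exp (|t| * |x|)) 2 _root_.stdGaussian := by
    intro t
    rw [memLp_two_iff_integrable_sq (by fun_prop)]
    have := integrable_exp_abs_mul_abs (μ := _root_.stdGaussian) (X := id) (t := 2 * t)
      (integrable_exp_mul_gaussianReal _) (integrable_exp_mul_gaussianReal _)
    refine this.congr (ae_of_all _ fun x => ?_)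
    simp only [← Real.exp_nat_mul, abs_mul, id]; simp; ring
  have hF : ∀ t : ℝ, ∫ x, (G x : ℂ) * Complex.exp (t * x * Complex.I) ∂_root_.stdGaussian = 0 := by
    intro t
    have hs := hasSum_integral_of_dominated_convergence (μ := _root_.stdGaussian)
      (F := fun (n : ℕ) (x : ℝ) => (G x : ℂ) * ((t * x * Complex.I) ^ n / n.factorial))
      (f := fun x => (G x : ℂ) * Complex.exp (t * x * Complex.I))
      (fun (n : ℕ) (x : ℝ) => |G x| * ((|t| * |x|) ^ n / n.factorial))
      (fun n => (Complex.continuous_ofReal.comp_aestronglyMeasurable hG.1).mul (by fun_prop))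
      (fun n => ae_of_all _ fun x => by simp [mul_pow])
      (ae_of_all _ fun x => (Real.summable_pow_div_factorial _).mul_left _)
      ?_ (ae_of_all _ fun x => ?_)
    · refine hs.unique ?_
      have : ∀ n : ℕ, ∫ x, (G x : ℂ) * ((t * x * Complex.I) ^ n / n.factorial) ∂_root_.stdGaussian = 0 := by
        intro n
        have e : ∀ x : ℝ, (G x : ℂ) * ((t * x * Complex.I) ^ n / n.factorial) =
            ((G x * x ^ n : ℝ) : ℂ) * ((t * Complex.I) ^ n / n.factorial) := by
          intro x; push_cast; ring
        simp only [e]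
        rw [integral_mul_const, integral_complex_ofReal, h n]; simp
      simp only [this]; exact hasSum_zero
    · simp only [tsum_mul_left]
      have := hG.norm.integrable_mul (hexp t)
      refine this.congr (ae_of_all _ fun x => ?_)
      simp [Real.exp_eq_exp_ℝ, NormedSpace.exp_eq_tsum_div]
    · have := (NormedSpace.expSeries_div_hasSum_exp (𝔸 := ℂ) (t * x * Complex.I)).mul_left (G x : ℂ)
      rw [← Complex.exp_eq_exp_ℂ] at this
      exact this
  have m1 : AEMeasurable (fun x => ENNReal.ofReal (G x)) _root_.stdGaussian :=
    hG.1.aemeasurable.ennreal_ofReal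
  have m2 : AEMeasurable (fun x => ENNReal.ofReal (-G x)) _root_.stdGaussian :=
    hG.1.aemeasurable.neg.ennreal_ofReal
  have f1 : IsFiniteMeasure (_root_.stdGaussian.withDensity fun x => ENNReal.ofReal (G x)) :=
    isFiniteMeasure_withDensity_ofReal hGi.2
  have f2 : IsFiniteMeasure (_root_.stdGaussian.withDensity fun x => ENNReal.ofReal (-G x)) :=
    isFiniteMeasure_withDensity_ofReal hGi.neg.2
  have heq : _root_.stdGaussian.withDensity (fun x => ENNReal.ofReal (G x)) =
      _root_.stdGaussian.withDensity (fun x => ENNReal.ofReal (-G x)) := by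
    apply Measure.ext_of_charFun
    ext t
    rw [charFun_apply_real, charFun_apply_real,
      integral_withDensity_eq_integral_toReal_smul₀ m1 (by simp),
      integral_withDensity_eq_integral_toReal_smul₀ m2 (by simp), ← sub_eq_zero, ← integral_sub]
    · rw [← hF t]
      congr 1; ext x
      rw [← sub_smul, Complex.real_smul]
      congr 2
      rcases le_total 0 (G x) with hx | hx
      · simp [hx, ENNReal.ofReal_of_nonpos (neg_nonpos.2 hx)]
      · simp [hx, ENNReal.ofReal_of_nonpos hx]
    · refine Integrable.mono hGi (m1.ennreal_toReal.aestronglyMeasurable.smul (by fun_prop))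
        (ae_of_all _ fun x => ?_)
      rw [norm_smul, ← Complex.ofReal_mul, Complex.norm_exp_ofReal_mul_I, ENNReal.toReal_ofReal',
        mul_one, norm_eq_abs, norm_eq_abs, abs_of_nonneg (le_max_right _ _)]
      exact max_le (le_abs_self _) (abs_nonneg _)
    · refine Integrable.mono hGi (m2.ennreal_toReal.aestronglyMeasurable.smul (by fun_prop))
        (ae_of_all _ fun x => ?_)
      rw [norm_smul, ← Complex.ofReal_mul, Complex.norm_exp_ofReal_mul_I, ENNReal.toReal_ofReal',
        mul_one, norm_eq_abs, norm_eq_abs, abs_of_nonneg (le_max_right _ _)]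
      exact max_le (neg_le_abs _) (abs_nonneg _)
  rw [withDensity_eq_iff_of_sigmaFinite m1 m2] at heq
  filter_upwards [heq] with x hx
  rcases lt_trichotomy (G x) 0 with h | h | h
  · rw [ENNReal.ofReal_of_nonpos h.le, eq_comm, ENNReal.ofReal_eq_zero] at hx
    linarith
  · exact h
  · rw [ENNReal.ofReal_of_nonpos (p := - G x) (by linarith), ENNReal.ofReal_eq_zero] at hx
    linarith

lemma complete' (G : ℝ → ℝ) (hG : MemLp G 2 _root_.stdGaussian)
    (h : ∀ n : ℕ, ∫ x, G x * He n x ∂_root_.stdGaussian = 0) : G =ᵐ[_root_.stdGaussian] 0 := by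
  apply complete G hG
  intro n
  induction n using Nat.strong_induction_on with
  | _ n ih =>
    have hn := h n
    simp only [He_eq, Polynomial.eval_eq_sum_range, HP_natDegree, Finset.mul_sum] at hn
    have hi : ∀ i : ℕ, Integrable (fun x => G x * x ^ i) _root_.stdGaussian :=
      fun i => hG.integrable_mul (memLp_pow_sg i)
    have e : ∀ (i : ℕ) (x : ℝ), G x * ((HP n).coeff i * x ^ i) = (HP n).coeff i * (G x * x ^ i) :=
      fun i x => by ring
    simp only [e] at hn
    rw [integral_finsetSum _ (fun i _ => (hi i).const_mul _)] at hn
    simp only [integral_const_mul] at hn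
    rw [Finset.sum_range_succ, Finset.sum_eq_zero (fun i hi => by
      rw [ih i (Finset.mem_range.1 hi), mul_zero])] at hn
    have := HP_monic n
    rw [Polynomial.Monic, Polynomial.leadingCoeff, HP_natDegree] at this
    simpa [this] using hn

lemma inner_toLp (f g : ℝ → ℝ) (hf : MemLp f 2 _root_.stdGaussian)
    (hg : MemLp g 2 _root_.stdGaussian) :
    inner ℝ (hf.toLp f) (hg.toLp g) = ∫ x, f x * g x ∂_root_.stdGaussian := by
  rw [L2.inner_def]
  apply integral_congr_ae
  filter_upwards [hf.coeFn_toLp, hg.coeFn_toLp] with x h1 h2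
  rw [h1, h2]; simp [mul_comm]

noncomputable def hv (n : ℕ) : Lp ℝ 2 _root_.stdGaussian :=
  (√(n.factorial : ℝ))⁻¹ • (memLp_He n).toLp (He n)

lemma inner_hv (f : ℝ → ℝ) (hf : MemLp f 2 _root_.stdGaussian) (n : ℕ) :
    inner ℝ (hf.toLp f) (hv n) = hermiteCoeff f n := by
  rw [hv, inner_smul_right, inner_toLp]; rfl

lemma orthonormal_hv : Orthonormal ℝ hv := by
  rw [orthonormal_iff_ite]
  intro i j
  simp only [hv, inner_smul_left, inner_smul_right, inner_toLp]
  rcases lt_trichotomy i j with h | h | h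
  · simp [orth_lt i j h, h.ne]
  · subst h
    rw [orth_self]
    have : (0 : ℝ) < i.factorial := by exact_mod_cast i.factorial_pos
    have h2 := Real.sq_sqrt this.le
    have : 0 < √(i.factorial : ℝ) := Real.sqrt_pos.2 this
    simp only [map_inv₀, conj_trivial, if_true]
    field_simp
    exact h2.symm
  · simp only [mul_comm (He i _)]
    simp [orth_lt j i h, h.ne']

lemma orth_bot : (Submodule.span ℝ (Set.range hv))ᗮ = ⊥ := by
  rw [Submodule.eq_bot_iff]
  intro g hg
  have hgm := Lp.memLp g
  have : (g : ℝ → ℝ) =ᵐ[_root_.stdGaussian] 0 := by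
    apply complete' _ hgm
    intro n
    have h1 : inner ℝ g (hv n) = 0 := by
      rw [Submodule.mem_orthogonal'] at hg
      exact hg _ (Submodule.subset_span ⟨n, rfl⟩)
    have h2 := inner_hv g hgm n
    rw [Lp.toLp_coeFn, h1, hermiteCoeff] at h2
    have : (0 : ℝ) < √(n.factorial : ℝ) :=
      Real.sqrt_pos.2 (by exact_mod_cast n.factorial_pos)
    have h3 := mul_eq_zero.1 h2.symm
    rcases h3 with h3 | h3
    · exact absurd h3 (inv_ne_zero this.ne')
    · exact h3
  exact (Lp.eq_zero_iff_ae_eq_zero).2 this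

lemma parseval (f : ℝ → ℝ) (hf : MemLp f 2 _root_.stdGaussian) :
    HasSum (fun n => hermiteCoeff f n ^ 2) (∫ x, f x ^ 2 ∂_root_.stdGaussian) := by
  have := (HilbertBasis.mkOfOrthogonalEqBot orthonormal_hv orth_bot).hasSum_inner_mul_inner
    (hf.toLp f) (hf.toLp f)
  rw [inner_toLp] at this
  simp only [HilbertBasis.coe_mkOfOrthogonalEqBot, real_inner_comm _ (hv _), inner_hv] at this
  simpa only [sq] using this

lemma coeff_deriv (k : ℕ) (F : ℝ → ℝ) (hF : ContDiff ℝ k F)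
    (h : ∀ ℓ ≤ k, MemLp (iteratedDeriv ℓ F) 2 _root_.stdGaussian) (j : ℕ) :
    hermiteCoeff (iteratedDeriv k F) j ^ 2 =
      ((j + k).descFactorial k : ℝ) * hermiteCoeff F (j + k) ^ 2 := by
  unfold hermiteCoeff
  rw [ibp_iter k F hF h j, mul_pow, mul_pow, inv_pow, inv_pow, Real.sq_sqrt (by positivity),
    Real.sq_sqrt (by positivity)]
  have e := Nat.factorial_mul_descFactorial (Nat.le_add_left k j)
  rw [Nat.add_sub_cancel] at e
  rw [← e]
  have : (0 : ℝ) < j.factorial := by exact_mod_cast j.factorial_pos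
  have : (0 : ℝ) < (j+k).descFactorial k := by
    exact_mod_cast Nat.descFactorial_pos.2 (Nat.le_add_left k j)
  push_cast
  field_simp

lemma term_bound (δ : ℝ) (hδ : 0 < δ) (k m : ℕ) (hkm : k ≤ m) (c B : ℝ)
    (h : (1 + (m : ℝ) ^ ((k : ℝ) / 2 + 1 / 2 + δ)) * |c| ≤ B) :
    (m.descFactorial k : ℝ) * c ^ 2 ≤ B ^ 2 * (if m = 0 then 1 else 1 / (m : ℝ) ^ (1 + 2 * δ)) := by
  have hp : 0 ≤ (m : ℝ) ^ ((k : ℝ) / 2 + 1 / 2 + δ) := by positivity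
  have hc := abs_nonneg c
  split_ifs with hm
  · subst hm
    obtain rfl : k = 0 := by omega
    simp only [Nat.descFactorial_zero, Nat.cast_one, one_mul, mul_one]
    rw [← sq_abs c]
    exact pow_le_pow_left₀ hc (by nlinarith) 2
  · have hm' : (0 : ℝ) < m := by exact_mod_cast Nat.pos_of_ne_zero hm
    have h1 : ((m : ℝ) ^ ((k : ℝ) / 2 + 1 / 2 + δ) * |c|) ^ 2 ≤ B ^ 2 :=
      pow_le_pow_left₀ (by positivity) (by nlinarith) 2
    have h2 : ((m : ℝ) ^ ((k : ℝ) / 2 + 1 / 2 + δ)) ^ 2 = (m : ℝ) ^ k * (m : ℝ) ^ (1 + 2 * δ) := by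
      rw [← Real.rpow_natCast, ← Real.rpow_natCast, ← Real.rpow_mul hm'.le, ← Real.rpow_add hm']
      congr 1; push_cast; ring
    rw [mul_pow, sq_abs, h2] at h1
    have h3 : (m.descFactorial k : ℝ) ≤ (m : ℝ) ^ k := by exact_mod_cast Nat.descFactorial_le_pow m k
    rw [mul_one_div, le_div_iff₀ (by positivity)]
    calc _ ≤ (m : ℝ) ^ k * c ^ 2 * (m : ℝ) ^ (1 + 2 * δ) := by gcongr
      _ ≤ _ := by linarith

theorem stmt4 (δ : ℝ) (hδ : 0 < δ) :
    ∃ C > 0, ∀ (k : ℕ) (F : ℝ → ℝ), ContDiff ℝ k F →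
      (∀ ℓ ≤ k, MemLp (iteratedDeriv ℓ F) 2 stdGaussian) →
      ∀ B : ℝ,
        (∀ m : ℕ, k ≤ m →
          (1 + (m : ℝ) ^ ((k : ℝ) / 2 + 1 / 2 + δ)) * |hermiteCoeff F m| ≤ B) →
        Real.sqrt (∫ x, (iteratedDeriv k F x) ^ 2 ∂stdGaussian) ≤ C * B := by
  set a : ℕ → ℝ := fun m => if m = 0 then 1 else 1 / (m : ℝ) ^ (1 + 2 * δ) with ha
  have ha0 : ∀ m, 0 ≤ a m := fun m => by simp only [ha]; split_ifs <;> positivity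
  have has : Summable a := by
    rw [← summable_nat_add_iff 1]
    have := (summable_nat_add_iff 1).2
      (Real.summable_one_div_nat_rpow.2 (show 1 < 1 + 2 * δ by linarith))
    simpa [ha] using this
  have hS : 0 ≤ ∑' m, a m := tsum_nonneg ha0
  refine ⟨√(1 + ∑' m, a m), Real.sqrt_pos.2 (by linarith), ?_⟩
  intro k F hF h B hB
  have hB0 : 0 ≤ B := le_trans (by positivity) (hB k le_rfl)
  have hp := parseval _ (h k le_rfl)
  have hsum : Summable (fun j => a (j + k)) := (summable_nat_add_iff k).2 has
  have hle : ∫ x, (iteratedDeriv k F x) ^ 2 ∂_root_.stdGaussian ≤ B ^ 2 * ∑' j, a (j + k) := by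
    refine hasSum_le (fun j => ?_) hp (hsum.hasSum.mul_left (B ^ 2))
    rw [coeff_deriv k F hF h j]
    exact term_bound δ hδ k (j + k) (by omega) _ B (hB _ (by omega))
  have hle2 : ∑' j, a (j + k) ≤ ∑' j, a j := by
    rw [← has.sum_add_tsum_nat_add k]
    have := Finset.sum_nonneg (fun i (_ : i ∈ Finset.range k) => ha0 i)
    linarith
  rw [Real.sqrt_le_iff]
  refine ⟨by positivity, hle.trans ?_⟩
  rw [mul_pow, Real.sq_sqrt (by linarith), mul_comm]
  exact mul_le_mul_of_nonneg_right (by linarith) (sq_nonneg B)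
end

section
/- Let F : ℝ → ℝ satisfy Assumption 1.2 with parameters κ ∈ (0,1/4) and ε : ℕ → ℝ. Then the normalised Hermite coefficients of F decay faster than any inverse power: for every k ∈ ℕ, m^k · ĉ_m(F) → 0 as m → ∞. -/
open MeasureTheory ProbabilityTheory Real Filter

lemma He_hasDerivAt (n : ℕ) (x : ℝ) : HasDerivAt (He n)
    (Polynomial.aeval x (Polynomial.derivative (Polynomial.hermite n))) x := by
  have := Polynomial.hasDerivAt_aeval (Polynomial.hermite n) x
  exact this

lemma He_succ (n : ℕ) (x : ℝ) : He (n+1) x = x * He n x -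
    Polynomial.aeval x (Polynomial.derivative (Polynomial.hermite n)) := by
  simp [He, Polynomial.hermite_succ]

lemma herm_deriv (n : ℕ) : Polynomial.derivative (Polynomial.hermite (n+1))
    = ((n : Polynomial ℤ) + 1) * Polynomial.hermite n := by
  induction n with
  | zero => simp
  | succ n ih =>
    rw [Polynomial.hermite_succ (n+1), ih]
    simp only [Polynomial.derivative_sub, Polynomial.derivative_mul, Polynomial.derivative_X, ih,
      Polynomial.derivative_add, Polynomial.derivative_natCast, Polynomial.derivative_one]
    rw [Polynomial.hermite_succ n]
    push_cast
    ring

/-- Gaussian weight. -/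
noncomputable def gw (x : ℝ) : ℝ := Real.exp (-(1/2) * x ^ 2)

lemma gw_hasDerivAt (x : ℝ) : HasDerivAt gw (-x * gw x) x := by
  have h : HasDerivAt (fun y : ℝ => -(1/2) * y ^ 2) (-x) x := by
    have := ((hasDerivAt_id x).pow 2).const_mul (-(1/2 : ℝ))
    refine this.congr_deriv ?_
    simp
  refine h.exp.congr_deriv ?_
  simp only [gw]; ring

lemma Hw_hasDerivAt (n : ℕ) (x : ℝ) :
    HasDerivAt (fun y => He n y * gw y) (-(He (n+1) x * gw x)) x := by
  have := (He_hasDerivAt n x).mul (gw_hasDerivAt x)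
  refine this.congr_deriv ?_
  rw [He_succ]; ring

lemma He_cont (n : ℕ) : Continuous (He n) :=
  continuous_iff_continuousAt.2 fun x => (He_hasDerivAt n x).continuousAt

lemma gw_cont : Continuous gw := by unfold gw; fun_prop

lemma poly_integrable (b : ℝ) (hb : 0 < b) (p : Polynomial ℤ) :
    Integrable (fun x : ℝ => Polynomial.aeval x p * Real.exp (-b * x ^ 2)) := by
  induction p using Polynomial.induction_on' with
  | add p q hp hq =>
    simp only [map_add, add_mul]
    exact hp.add hq
  | monomial n a =>
    have h := integrable_rpow_mul_exp_neg_mul_sq hb (s := (n : ℝ))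
      (by have : (0:ℝ) ≤ n := n.cast_nonneg
          linarith)
    simp only [Real.rpow_natCast] at h
    have := h.const_mul (a : ℝ)
    refine this.congr (Eventually.of_forall fun x => ?_)
    simp [Polynomial.aeval_monomial]
    ring

lemma dom_integrable (κ : ℝ) (hκ : κ < 1/4) (C : ℝ) (g : ℝ → ℝ) (hg : Continuous g)
    (hb : ∀ x, |g x| ≤ C * Real.exp (κ * x ^ 2)) (n : ℕ) :
    Integrable (fun x => g x * (He n x * gw x)) := by
  have h := (poly_integrable (1/2 - κ) (by linarith) (Polynomial.hermite n)).norm.const_mul C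
  refine h.mono' (hg.mul ((He_cont n).mul gw_cont)).aestronglyMeasurable
    (Eventually.of_forall fun x => ?_)
  have e : Real.exp (-(1/2 - κ) * x ^ 2) = Real.exp (κ * x ^ 2) * gw x := by
    rw [gw, ← Real.exp_add]; congr 1; ring
  rw [e]
  simp only [norm_mul, Real.norm_eq_abs, abs_of_pos (Real.exp_pos _)]
  calc |g x| * (|He n x| * |gw x|) ≤ (C * Real.exp (κ * x ^ 2)) * (|He n x| * |gw x|) := by
        gcongr; exact hb x
    _ = _ := by simp only [He]; ring

lemma sq_integrable (κ : ℝ) (hκ : κ < 1/4) (C : ℝ) (g : ℝ → ℝ) (hg : Continuous g)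
    (hb : ∀ x, |g x| ≤ C * Real.exp (κ * x ^ 2)) :
    Integrable (fun x => g x ^ 2 * gw x) := by
  have h := (integrable_exp_neg_mul_sq (b := 1/2 - 2 * κ) (by linarith)).const_mul (C^2)
  refine h.mono' ((hg.pow 2).mul gw_cont).aestronglyMeasurable
    (Eventually.of_forall fun x => ?_)
  have e : Real.exp (-(1/2 - 2 * κ) * x ^ 2) = Real.exp (κ * x ^ 2) ^ 2 * gw x := by
    rw [gw, ← Real.exp_nat_mul, ← Real.exp_add]; congr 1; push_cast; ring
  rw [e]
  have hw : 0 < gw x := Real.exp_pos _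
  rw [norm_mul, norm_pow, Real.norm_eq_abs, Real.norm_eq_abs, abs_of_pos hw, ← mul_assoc, ← mul_pow]
  gcongr
  exact hb x

lemma ibp_s7 (g g' : ℝ → ℝ) (n : ℕ) (hg : ∀ x, HasDerivAt g (g' x) x)
    (h1 : Integrable (fun x => g x * (He (n+1) x * gw x)))
    (h2 : Integrable (fun x => g' x * (He n x * gw x)))
    (h3 : Integrable (fun x => g x * (He n x * gw x))) :
    ∫ x, g x * (He (n+1) x * gw x) = ∫ x, g' x * (He n x * gw x) := by
  have := integral_mul_deriv_eq_deriv_mul_of_integrable (u := g) (u' := g')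
    (v := fun y => He n y * gw y) (v' := fun x => -(He (n+1) x * gw x))
    (fun x _ => hg x) (fun x _ => Hw_hasDerivAt n x)
    (by
      refine h1.neg.congr (Eventually.of_forall fun x => ?_)
      simp) h2 h3
  simp only [mul_neg, integral_neg] at this
  linarith

lemma HH_integrable (m n : ℕ) : Integrable (fun x => He m x * (He n x * gw x)) := by
  have := poly_integrable (1/2) (by norm_num) (Polynomial.hermite m * Polynomial.hermite n)
  refine this.congr (Eventually.of_forall fun x => ?_)
  simp [He, gw]; ring

lemma He_norm (n : ℕ) : ∫ x, He n x * (He n x * gw x) = n.factorial * ∫ x, gw x := by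
  induction n with
  | zero => simp [He]
  | succ n ih =>
    have hd : ∀ x, HasDerivAt (He (n+1)) (((n:ℝ)+1) * He n x) x := fun x => by
      have := He_hasDerivAt (n+1) x
      rw [herm_deriv] at this
      simpa [He] using this
    rw [ibp_s7 (He (n+1)) _ n hd (HH_integrable _ _) ?_ (HH_integrable _ _)]
    · simp only [mul_assoc]
      rw [integral_const_mul, ih, Nat.factorial_succ]
      push_cast; ring
    · simp only [mul_assoc]
      exact (HH_integrable n n).const_mul _

lemma coeff_eq (F : ℝ → ℝ) (m : ℕ) : hermiteCoeff F m =
    (Real.sqrt (Nat.factorial m))⁻¹ * ((√(2 * π))⁻¹ * ∫ x, F x * (He m x * gw x)) := by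
  unfold hermiteCoeff _root_.stdGaussian
  rw [integral_gaussianReal_eq_integral_smul (by norm_num), ← integral_const_mul (√(2 * π))⁻¹]
  congr 1
  refine integral_congr_ae (Eventually.of_forall fun x => ?_)
  simp [gaussianPDFReal, gw]
  rw [show -(2⁻¹ * x^2) = -x^2/2 by ring]
  ring

theorem stmt7 (κ : ℝ) (hκ : κ ∈ Set.Ioo (0 : ℝ) (1 / 4)) (ε : ℕ → ℝ)
    (hε : Tendsto (fun n : ℕ => ε n / n) atTop (nhds 0))
    (F : ℝ → ℝ) (hF : ∀ n : ℕ, ContDiff ℝ n F)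
    (hbound : ∀ (n : ℕ) (y : ℝ),
      |iteratedDeriv n F y| ≤ Real.exp (Real.exp (ε n)) * Real.exp (κ * y ^ 2)) :
    ∀ k : ℕ, Tendsto (fun m : ℕ => (m : ℝ) ^ k * hermiteCoeff F m) atTop (nhds 0) := by
  intro k
  have hc : ∀ n, Continuous (iteratedDeriv n F) := fun n =>
    (hF n).continuous_iteratedDeriv n le_rfl
  have hd : ∀ n x, HasDerivAt (iteratedDeriv n F) (iteratedDeriv (n+1) F x) x := fun n x => by
    rw [iteratedDeriv_succ]
    exact ((hF (n+1)).differentiable_iteratedDeriv n (by exact_mod_cast Nat.lt_succ_self n)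
      x).hasDerivAt
  have hi : ∀ j n, Integrable (fun x => iteratedDeriv j F x * (He n x * gw x)) := fun j n =>
    dom_integrable κ hκ.2 _ _ (hc j) (hbound j) n
  have hs : ∀ j n, ∫ x, F x * (He (n+j) x * gw x)
      = ∫ x, iteratedDeriv j F x * (He n x * gw x) := by
    intro j
    induction j with
    | zero => intro n; simp
    | succ j ih =>
      intro n
      rw [show n + (j+1) = (n+1) + j by ring, ih (n+1)]
      exact ibp_s7 _ _ n (hd j) (hi _ _) (hi _ _) (hi _ _)
  set j := 2 * (k+1) with hj
  set A := ∫ x, iteratedDeriv j F x ^ 2 * gw x with hA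
  set B := ∫ x, gw x with hB
  have hA' := sq_integrable κ hκ.2 _ _ (hc j) (hbound j)
  have hA0 : 0 ≤ A := integral_nonneg fun x => mul_nonneg (sq_nonneg _) (Real.exp_pos _).le
  have hB0 : 0 ≤ B := integral_nonneg fun x => (Real.exp_pos _).le
  have key : ∀ n, |∫ x, iteratedDeriv j F x * (He n x * gw x)| ≤ √(n.factorial) * (A + B) := by
    intro n
    set t := √(n.factorial : ℝ) with ht
    have ht0 : 0 < t := Real.sqrt_pos.2 (by exact_mod_cast n.factorial_pos)
    have ht2 : t ^ 2 = n.factorial := Real.sq_sqrt (by positivity)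
    have h1 : |∫ x, iteratedDeriv j F x * (He n x * gw x)| ≤
        ∫ x, (t * (iteratedDeriv j F x ^ 2 * gw x) + t⁻¹ * (He n x * (He n x * gw x))) := by
      refine norm_integral_le_of_norm_le (f := fun x => iteratedDeriv j F x * (He n x * gw x))
        ((hA'.const_mul t).add ((HH_integrable n n).const_mul t⁻¹))
        (Eventually.of_forall fun x => ?_)
      have hw : 0 < gw x := Real.exp_pos _
      simp only [norm_mul, Real.norm_eq_abs, abs_of_pos hw]
      have h2 : |iteratedDeriv j F x| * |He n x| ≤
          t * iteratedDeriv j F x ^ 2 + t⁻¹ * He n x ^ 2 := by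
        rw [← sq_abs (iteratedDeriv j F x), ← sq_abs (He n x)]
        set a := |iteratedDeriv j F x|
        set b := |He n x|
        have e : t * a ^ 2 + t⁻¹ * b ^ 2 - a * b = t⁻¹ * ((t * a - b/2) ^ 2 + 3/4 * b ^ 2) := by
          field_simp; ring
        have : 0 ≤ t⁻¹ * ((t * a - b/2) ^ 2 + 3/4 * b ^ 2) := by positivity
        linarith
      nlinarith [mul_le_mul_of_nonneg_right h2 hw.le]
    rw [integral_add (hA'.const_mul t) ((HH_integrable n n).const_mul t⁻¹), integral_const_mul,
      integral_const_mul, He_norm, ← ht2] at h1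
    refine h1.trans (le_of_eq ?_)
    rw [← hA, ← hB]
    field_simp
  rw [← tendsto_add_atTop_iff_nat j]
  set K := ((j:ℝ)+1)^k * ((√(2 * π))⁻¹ * (A + B)) with hK
  have hlim : Tendsto (fun n : ℕ => K * (1 / ((n:ℝ) + 1))) atTop (nhds 0) := by
    simpa using tendsto_one_div_add_atTop_nhds_zero_nat.const_mul K
  refine squeeze_zero_norm (fun n => ?_) hlim
  rw [coeff_eq, hs j n]
  have hn0 : (0:ℝ) < √(n.factorial) := Real.sqrt_pos.2 (by exact_mod_cast n.factorial_pos)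
  have hm0 : (0:ℝ) < √((n+j).factorial) := Real.sqrt_pos.2 (by exact_mod_cast (n+j).factorial_pos)
  have hfac : √(n.factorial : ℝ) * ((n:ℝ)+1)^(k+1) ≤ √((n+j).factorial : ℝ) := by
    apply Real.le_sqrt_of_sq_le
    rw [mul_pow, Real.sq_sqrt (by positivity), ← pow_mul, mul_comm (k+1) 2]
    exact_mod_cast Nat.factorial_mul_pow_le_factorial (m := n) (n := j)
  have hfac' : (√((n+j).factorial : ℝ))⁻¹ * √(n.factorial : ℝ) ≤ (((n:ℝ)+1)^(k+1))⁻¹ := by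
    rw [inv_mul_le_iff₀ hm0, ← div_eq_mul_inv, le_div_iff₀ (by positivity)]
    exact hfac
  have hpow : ((n + j : ℕ) : ℝ)^k ≤ (((j:ℝ)+1) * ((n:ℝ)+1))^k := by
    gcongr
    push_cast
    have : (0:ℝ) ≤ (j:ℝ) * n := by positivity
    nlinarith
  have hp : 0 ≤ (√(2 * π))⁻¹ := by positivity
  rw [Real.norm_eq_abs, abs_mul, abs_mul, abs_mul, abs_of_nonneg (by positivity : (0:ℝ) ≤ ((n + j : ℕ) : ℝ)^k),
    abs_of_pos (inv_pos.2 hm0), abs_of_nonneg hp]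
  calc ((n + j : ℕ) : ℝ)^k * ((√((n+j).factorial : ℝ))⁻¹ * ((√(2 * π))⁻¹ *
        |∫ x, iteratedDeriv j F x * (He n x * gw x)|))
      ≤ (((j:ℝ)+1) * ((n:ℝ)+1))^k * ((√((n+j).factorial : ℝ))⁻¹ * ((√(2 * π))⁻¹ *
        (√(n.factorial) * (A + B)))) := by
        gcongr
        exact key n
    _ = (((j:ℝ)+1) * ((n:ℝ)+1))^k * ((√((n+j).factorial : ℝ))⁻¹ * √(n.factorial)) *
        ((√(2 * π))⁻¹ * (A + B)) := by ring
    _ ≤ (((j:ℝ)+1) * ((n:ℝ)+1))^k * (((n:ℝ)+1)^(k+1))⁻¹ * ((√(2 * π))⁻¹ * (A + B)) := by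
        gcongr
    _ = K * (1 / ((n:ℝ) + 1)) := by
        rw [hK, mul_pow, pow_succ]
        field_simp
end
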